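/- Assume L/2 ≥ M ≥ r. Fix a subset S* ⊆ {1,…,M} and a ≥ 0. For a sequence X = (x_1,…,x_{L+1}) write X_{l−S*} = (x_{l−s})_{s∈S*}, and define: the reweighted stationary distribution μ̃_X on 𝒳 × 𝒳^{S*} by μ̃_X(z, F) = [ (Σ_{Z : Z_{−S*}=F} μ̄(z, Z)) · exp(a·1{F = X_{L+1−S*}}) ] / [ Σ_{z′, Z′} μ̄(z′, Z′) · exp(a·1{Z′_{−S*} = X_{L+1−S*}}) ]; the attention weights σ*_l = exp(a·1{X_{l−S*} = X_{L+1−S*}}) / Σ_{l′=M+1}^{L} exp(a·1{X_{l′−S*} = X_{L+1−S*}}) for M+1 ≤ l ≤ L; and the weighted empirical distribution ν̂_X(z, F) = Σ_{l=M+1}^{L} σ*_l · 1{x_l = z, X_{l−S*} = F}. Let ν_{S*} denote the marginal of μ̄ on the coordinates (x_{M+1}, (x_{M+1−s})_{s∈S*}) and assume m := min_{(e,F)} ν_{S*}(e, F) > 0. Then E_{X∼p}[ Σ_{z∈𝒳, F∈𝒳^{S*}} | μ̃_X(z,F) − ν̂_X(z,F) | ] ≤ 4·( (1−λ)^{−1}√(D₀+1)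 + 4M )^{1/2} / ( L^{1/2} · m ). -/

import Mathlib

open Finset

/-- Probability of the full sequence `x` (tokens indexed `0,…,T-1`, i.e. `x_1,…,x_T`)
under the `n`-gram Markov chain with parent offsets `r`, transition kernel `pk`,
and initial distribution `init` on the first `R` tokens. -/
noncomputable def ngramProb (d n R T : ℕ) (r : Fin n → ℕ)
    (pk : (Fin n → Fin d) → Fin d → ℝ) (init : (Fin R → Fin d) → ℝ)
    (hRT : R ≤ T) (x : Fin T → Fin d) : ℝ :=
  init (fun i => x ⟨i.1, lt_of_lt_of_le i.2 hRT⟩) *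
    ∏ l ∈ (Finset.Ico R T).attach,
      pk (fun k => x ⟨l.1 - r k, lt_of_le_of_lt (Nat.sub_le _ _) (Finset.mem_Ico.mp l.2).2⟩)
        (x ⟨l.1, (Finset.mem_Ico.mp l.2).2⟩)

/-- The window transition matrix `P_π` on `𝒳^R` of the `n`-gram chain:
`P(Z', Z) = π(z'_R | Z parents) · 1{Z' is the shift of Z}`. -/
noncomputable def windowMatrix (d n R : ℕ) (hR : 0 < R) (r : Fin n → ℕ)
    (hrpos : ∀ k, 0 < r k) (pk : (Fin n → Fin d) → Fin d → ℝ) :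
    Matrix (Fin R → Fin d) (Fin R → Fin d) ℝ :=
  Matrix.of fun Z' Z =>
    if ∀ j : Fin (R - 1),
        Z' ⟨j.1, lt_of_lt_of_le j.2 (Nat.sub_le R 1)⟩ = Z ⟨j.1 + 1, by have := j.2; omega⟩ then
      pk (fun k => Z ⟨R - r k, Nat.sub_lt hR (hrpos k)⟩) (Z' ⟨R - 1, Nat.sub_lt hR Nat.one_pos⟩)
    else 0

/-- The matrix `K - √μ (√μ)ᵀ` where `K = diag(√μ)⁻¹ P_π diag(√μ)`. -/
noncomputable def specA (d n R : ℕ) (hR : 0 < R) (r : Fin n → ℕ) (hrpos : ∀ k, 0 < r k)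
    (pk : (Fin n → Fin d) → Fin d → ℝ) (μ : (Fin R → Fin d) → ℝ) :
    Matrix (Fin R → Fin d) (Fin R → Fin d) ℝ :=
  (Matrix.diagonal fun Z => (Real.sqrt (μ Z))⁻¹) * windowMatrix d n R hR r hrpos pk *
      (Matrix.diagonal fun Z => Real.sqrt (μ Z)) -
    Matrix.vecMulVec (fun Z => Real.sqrt (μ Z)) (fun Z => Real.sqrt (μ Z))

/-- The tuple `(x_{l0-s})_{s ∈ S}` of tokens at offsets `S` before position `l0` (0-based). -/
def parents (d T : ℕ) (S : Finset ℕ) (x : Fin T → Fin d) (l0 : ℕ) (hl : l0 < T) :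
    {s // s ∈ S} → Fin d :=
  fun s => x ⟨l0 - s.1, lt_of_le_of_lt (Nat.sub_le _ _) hl⟩

/-- The window `Y_{l0} = (x_{l0}, (x_{l0-s})_{s ∈ S})` (0-based position `l0`). -/
def window (d T : ℕ) (S : Finset ℕ) (x : Fin T → Fin d) (l0 : ℕ) (hl : l0 < T) :
    Fin d × ({s // s ∈ S} → Fin d) :=
  (x ⟨l0, hl⟩, parents d T S x l0 hl)

/-- The law of the window `Y_{l0}` when the full sequence is distributed as `q`. -/
noncomputable def windowLaw (d T : ℕ) (S : Finset ℕ) (q : (Fin T → Fin d) → ℝ)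
    (l0 : ℕ) (hl : l0 < T) (w : Fin d × ({s // s ∈ S} → Fin d)) : ℝ :=
  ∑ x : Fin T → Fin d, if window d T S x l0 hl = w then q x else 0

/-- Total variation distance: half the ℓ₁ distance. -/
noncomputable def tvDist {α : Type*} [Fintype α] (p q : α → ℝ) : ℝ :=
  (∑ w, |p w - q w|) / 2

/-- χ²-divergence `D_{χ²}(p ‖ q) = Σ_ω (p ω - q ω)² / q ω`. -/
noncomputable def chiSq {α : Type*} [Fintype α] (p q : α → ℝ) : ℝ :=
  ∑ w, (p w - q w) ^ 2 / q w

theorem icoLtSucc {M L : ℕ} (l : {m // m ∈ Finset.Ico M L}) : l.1 < L + 1 :=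
  Nat.lt_succ_of_lt (Finset.mem_Ico.mp l.2).2

/-- The reweighted stationary distribution `μ̃_X` on `𝒳 × 𝒳^{S}`:
`μ̃(z, F) ∝ (Σ_{Z : Z_{-S}=F} μ̄(z,Z)) · exp(a·1{F = F₀})` with `F₀ = X_{L+1-S}`. -/
noncomputable def reweighted (d M : ℕ) (S : Finset ℕ) (a : ℝ)
    (mubar : (Fin (M + 1) → Fin d) → ℝ) (F0 : {s // s ∈ S} → Fin d)
    (w : Fin d × ({s // s ∈ S} → Fin d)) : ℝ :=
  windowLaw d (M + 1) S mubar M (Nat.lt_succ_self M) w *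
      Real.exp (a * (if w.2 = F0 then 1 else 0)) /
    ∑ y : Fin (M + 1) → Fin d,
      mubar y *
        Real.exp (a * (if parents d (M + 1) S y M (Nat.lt_succ_self M) = F0 then 1 else 0))


/-- `g` depends only on the coordinates below `T`. -/
def Dep {d : ℕ} (T : ℕ) (g : (ℕ → Fin d) → ℝ) : Prop :=
  ∀ x y : ℕ → Fin d, (∀ i, i < T → x i = y i) → g x = g y

/-- Resample the coordinate `l` according to the kernel. -/
noncomputable def stepOp {d n : ℕ} (r : Fin n → ℕ) (pk : (Fin n → Fin d) → Fin d → ℝ) (l : ℕ)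
    (g : (ℕ → Fin d) → ℝ) : (ℕ → Fin d) → ℝ :=
  fun x => ∑ e, pk (fun k => x (l - r k)) e * g (Function.update x l e)

/-- Resample the coordinates `l, …, l+k-1`. -/
noncomputable def iterOp {d n : ℕ} (r : Fin n → ℕ) (pk : (Fin n → Fin d) → Fin d → ℝ) (l : ℕ)
    (k : ℕ) (g : (ℕ → Fin d) → ℝ) : (ℕ → Fin d) → ℝ :=
  match k with
  | 0 => g
  | k + 1 => stepOp r pk l (iterOp r pk (l + 1) k g)

/-- Shift by `t`. -/
def shn {d : ℕ} (t : ℕ) (x : ℕ → Fin d) : ℕ → Fin d := fun i => x (i + t)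

/-- Extend a finite sequence. -/
def extd {d T : ℕ} (hd : 0 < d) (x : Fin T → Fin d) : ℕ → Fin d :=
  fun i => if h : i < T then x ⟨i, h⟩ else ⟨0, hd⟩

/-- The window on infinite sequences. -/
def wind {d : ℕ} (S : Finset ℕ) (x : ℕ → Fin d) (l : ℕ) : Fin d × ({s // s ∈ S} → Fin d) :=
  (x l, fun s => x (l - s.1))

section ops
variable {d n R : ℕ} {r : Fin n → ℕ} {pk : (Fin n → Fin d) → Fin d → ℝ}

theorem Dep.mono {T T' : ℕ} {g : (ℕ → Fin d) → ℝ} (h : Dep T g) (hT : T ≤ T') : Dep T' g :=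
  fun x y hxy => h x y fun i hi => hxy i (lt_of_lt_of_le hi hT)

theorem Dep.shift {T t : ℕ} {g : (ℕ → Fin d) → ℝ} (h : Dep T g) :
    Dep (T + t) (fun x => g (shn t x)) :=
  fun x y hxy => h _ _ fun i hi => hxy (i + t) (by omega)

theorem Dep.mul {T : ℕ} {g h : (ℕ → Fin d) → ℝ} (hg : Dep T g) (hh : Dep T h) :
    Dep T (fun x => g x * h x) :=
  fun x y hxy => by simp only [hg x y hxy, hh x y hxy]

theorem stepOp_dep (hrpos : ∀ i, 0 < r i) {l : ℕ} (hl : 0 < l) {g : (ℕ → Fin d) → ℝ}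
    (hg : Dep (l + 1) g) : Dep l (stepOp r pk l g) := by
  intro x y hxy
  unfold stepOp
  refine Finset.sum_congr rfl fun e _ => ?_
  have h1 : (fun k => x (l - r k)) = fun k => y (l - r k) :=
    funext fun k => hxy _ (Nat.sub_lt hl (hrpos k))
  rw [h1, hg (Function.update x l e) (Function.update y l e)]
  intro i hi
  by_cases h : i = l
  · subst h; simp
  · simp [h]; exact hxy i (by omega)

theorem iterOp_dep (hrpos : ∀ i, 0 < r i) (k : ℕ) : ∀ {l : ℕ} (_ : 0 < l) {g : (ℕ → Fin d) → ℝ}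
    (_ : Dep (l + k) g), Dep l (iterOp r pk l k g) := by
  induction k with
  | zero => intro l hl g hg; exact hg
  | succ k ih =>
    intro l hl g hg
    exact stepOp_dep hrpos hl (ih (Nat.succ_pos l) (by rwa [show l + 1 + k = l + (k + 1) by omega]))

theorem stepOp_mul {l : ℕ} {g h : (ℕ → Fin d) → ℝ} (hh : Dep l h) :
    stepOp r pk l (fun x => h x * g x) = fun x => h x * stepOp r pk l g x := by
  funext x
  unfold stepOp
  rw [Finset.mul_sum]
  refine Finset.sum_congr rfl fun e _ => ?_
  beta_reduce
  rw [hh (Function.update x l e) x]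
  · ring
  · intro i hi
    rw [Function.update_of_ne (by omega)]

theorem iterOp_mul (k : ℕ) : ∀ {l : ℕ} {g h : (ℕ → Fin d) → ℝ} (_ : Dep l h),
    iterOp r pk l k (fun x => h x * g x) = fun x => h x * iterOp r pk l k g x := by
  induction k with
  | zero => intro l g h hh; rfl
  | succ k ih =>
    intro l g h hh
    simp only [iterOp]
    rw [ih (hh.mono (Nat.le_succ l)), stepOp_mul hh]

theorem stepOp_const (hpk1 : ∀ Y, ∑ e, pk Y e = 1) {l : ℕ} (c : ℝ) :
    stepOp r pk l (fun _ => c) = fun _ => c := by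
  funext x
  simp [stepOp, ← Finset.sum_mul, hpk1]

theorem iterOp_const (hpk1 : ∀ Y, ∑ e, pk Y e = 1) (k : ℕ) : ∀ {l : ℕ} (c : ℝ),
    iterOp r pk l k (fun _ => c) = fun _ => c := by
  induction k with
  | zero => intro l c; rfl
  | succ k ih => intro l c; simp only [iterOp]; rw [ih, stepOp_const hpk1]

theorem iterOp_triv (hpk1 : ∀ Y, ∑ e, pk Y e = 1) (k : ℕ) {l : ℕ} {g : (ℕ → Fin d) → ℝ}
    (hg : Dep l g) : iterOp r pk l k g = g := by
  have := iterOp_mul (r := r) (pk := pk) k (g := fun _ => 1) hg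
  rw [iterOp_const hpk1] at this
  simpa using this

theorem iterOp_add (j : ℕ) : ∀ (k l : ℕ) (g : (ℕ → Fin d) → ℝ),
    iterOp r pk l (j + k) g = iterOp r pk l j (iterOp r pk (l + j) k g) := by
  induction j with
  | zero => intro k l g; simp [iterOp]
  | succ j ih =>
    intro k l g
    rw [show j + 1 + k = (j + k) + 1 by omega]
    simp only [iterOp]
    rw [ih, show l + 1 + j = l + (j + 1) by omega]

theorem stepOp_shift (hrR : ∀ i, r i ≤ R) {l : ℕ} (hl : R ≤ l) (t : ℕ) (g : (ℕ → Fin d) → ℝ) :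
    stepOp r pk (l + t) (fun x => g (shn t x)) = fun x => stepOp r pk l g (shn t x) := by
  funext x
  unfold stepOp
  refine Finset.sum_congr rfl fun e _ => ?_
  beta_reduce
  have h1 : (fun k => x (l + t - r k)) = fun k => shn t x (l - r k) := by
    funext k
    have := hrR k
    simp only [shn]
    congr 1
    omega
  have h2 : shn t (Function.update x (l + t) e) = Function.update (shn t x) l e := by
    funext i
    simp [shn, Function.update_apply]
  rw [h1, h2]

theorem iterOp_shift (hrR : ∀ i, r i ≤ R) (k : ℕ) : ∀ {l : ℕ} (_ : R ≤ l) (t : ℕ)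
    (g : (ℕ → Fin d) → ℝ),
    iterOp r pk (l + t) k (fun x => g (shn t x)) = fun x => iterOp r pk l k g (shn t x) := by
  induction k with
  | zero => intro l hl t g; rfl
  | succ k ih =>
    intro l hl t g
    simp only [iterOp]
    rw [show l + t + 1 = l + 1 + t by omega, ih (by omega), stepOp_shift hrR hl]

theorem shn_shn (s t : ℕ) (x : ℕ → Fin d) : shn s (shn t x) = shn (s + t) x := by
  funext i; simp [shn, add_assoc]

theorem top_succ (hrR : ∀ i, r i ≤ R) (k : ℕ) (f : (ℕ → Fin d) → ℝ) :
    iterOp r pk R (k + 1) (fun x => f (shn (k + 1) x)) =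
      stepOp r pk R (fun x => iterOp r pk R k (fun x => f (shn k x)) (shn 1 x)) := by
  simp only [iterOp]
  congr 1
  rw [← iterOp_shift hrR k le_rfl 1]
  simp only [shn_shn]

theorem stepOp_nonneg (hpk0 : ∀ Y e, 0 ≤ pk Y e) {l : ℕ} {g : (ℕ → Fin d) → ℝ}
    (hg : ∀ x, 0 ≤ g x) (x) : 0 ≤ stepOp r pk l g x :=
  Finset.sum_nonneg fun _ _ => mul_nonneg (hpk0 _ _) (hg _)

theorem iterOp_nonneg (hpk0 : ∀ Y e, 0 ≤ pk Y e) (k : ℕ) : ∀ {l : ℕ} {g : (ℕ → Fin d) → ℝ}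
    (_ : ∀ x, 0 ≤ g x) (x), 0 ≤ iterOp r pk l k g x := by
  induction k with
  | zero => intro l g hg; exact hg
  | succ k ih => intro l g hg; exact stepOp_nonneg hpk0 (ih hg)

theorem stepOp_sum {ι : Type*} (s : Finset ι) (l : ℕ) (g : ι → (ℕ → Fin d) → ℝ) :
    stepOp r pk l (fun x => ∑ i ∈ s, g i x) = fun x => ∑ i ∈ s, stepOp r pk l (g i) x := by
  funext x
  simp only [stepOp, Finset.mul_sum]
  exact Finset.sum_comm

theorem iterOp_sum {ι : Type*} (s : Finset ι) (k : ℕ) : ∀ (l : ℕ) (g : ι → (ℕ → Fin d) → ℝ),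
    iterOp r pk l k (fun x => ∑ i ∈ s, g i x) = fun x => ∑ i ∈ s, iterOp r pk l k (g i) x := by
  induction k with
  | zero => intro l g; rfl
  | succ k ih => intro l g; simp only [iterOp]; rw [ih, stepOp_sum]

theorem stepOp_sub (hpk1 : ∀ Y, ∑ e, pk Y e = 1) (l : ℕ) (g : (ℕ → Fin d) → ℝ) (c : ℝ) :
    stepOp r pk l (fun x => g x - c) = fun x => stepOp r pk l g x - c := by
  funext x
  simp [stepOp, mul_sub, Finset.sum_sub_distrib, ← Finset.sum_mul, hpk1]

theorem iterOp_sub (hpk1 : ∀ Y, ∑ e, pk Y e = 1) (k : ℕ) : ∀ (l : ℕ) (g : (ℕ → Fin d) → ℝ) (c : ℝ),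
    iterOp r pk l k (fun x => g x - c) = fun x => iterOp r pk l k g x - c := by
  induction k with
  | zero => intro l g c; rfl
  | succ k ih => intro l g c; simp only [iterOp]; rw [ih, stepOp_sub hpk1]

theorem extd_lt {T : ℕ} (hd : 0 < d) (x : Fin T → Fin d) {i : ℕ} (h : i < T) :
    extd hd x i = x ⟨i, h⟩ := by simp [extd, h]

theorem extd_snoc {T : ℕ} (hd : 0 < d) (x : Fin T → Fin d) (e : Fin d) :
    extd (T := T + 1) hd (Fin.snoc x e) = Function.update (extd hd x) T e := by
  funext i
  by_cases h : i = T
  · subst h; simp [extd, Fin.snoc]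
  · rw [Function.update_of_ne h]
    by_cases h' : i < T
    · have h2 : i < T + 1 := by omega
      simp [extd, h', h2, Fin.snoc]
    · have h2 : ¬ i < T + 1 := by omega
      simp [extd, h', h2]

theorem ngramProb_eq (hd : 0 < d) (T : ℕ) (init : (Fin R → Fin d) → ℝ) (hRT : R ≤ T)
    (x : Fin T → Fin d) :
    ngramProb d n R T r pk init hRT x = init (fun i => extd hd x i.1) *
      ∏ l ∈ Finset.Ico R T, pk (fun k => extd hd x (l - r k)) (extd hd x l) := by
  unfold ngramProb
  rw [← Finset.prod_attach (Finset.Ico R T)]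
  congr 1
  · congr 1
    funext i
    rw [extd_lt hd x (lt_of_lt_of_le i.2 hRT)]
  · refine Finset.prod_congr rfl fun l _ => ?_
    have hl := (Finset.mem_Ico.mp l.2).2
    rw [extd_lt hd x hl]
    congr 1
    funext k
    rw [extd_lt hd x (lt_of_le_of_lt (Nat.sub_le _ _) hl)]

theorem bridge (hd : 0 < d) (hR : 0 < R) (hrpos : ∀ i, 0 < r i) (init : (Fin R → Fin d) → ℝ)
    (k : ℕ) : ∀ (T : ℕ) (_ : T = R + k) (hRT : R ≤ T) (g : (ℕ → Fin d) → ℝ),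
    ∑ x : Fin T → Fin d, ngramProb d n R T r pk init hRT x * g (extd hd x) =
      ∑ Z : Fin R → Fin d, init Z * iterOp r pk R k g (extd hd Z) := by
  induction k with
  | zero =>
    intro T hT hRT g
    obtain rfl : T = R := by omega
    refine Finset.sum_congr rfl fun x _ => ?_
    rw [ngramProb_eq hd, Finset.Ico_self, Finset.prod_empty, mul_one]
    have h1 : (fun i : Fin T => extd hd x i.1) = x := by
      funext i; rw [extd_lt hd x i.2]
    rw [h1]
    rfl
  | succ k ih =>
    intro T hT hRT g
    obtain ⟨T', rfl⟩ : ∃ T', T = T' + 1 := ⟨R + k, by omega⟩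
    have hT' : T' = R + k := by omega
    rw [iterOp_add k 1, ← ih T' hT' (by omega)]
    rw [← (Fin.snocEquiv (fun _ : Fin (T' + 1) => Fin d)).sum_comp, Fintype.sum_prod_type_right]
    refine Finset.sum_congr rfl fun x _ => ?_
    simp only [iterOp, stepOp, Finset.mul_sum]
    refine Finset.sum_congr rfl fun e _ => ?_
    have he : (Fin.snocEquiv (fun _ : Fin (T' + 1) => Fin d)) (e, x) = Fin.snoc x e := rfl
    rw [he, ngramProb_eq hd, ngramProb_eq hd, extd_snoc, Finset.prod_Ico_succ_top (by omega),
      ← hT']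
    have h1 : (fun i : Fin R => Function.update (extd hd x) T' e i.1) =
        fun i => extd hd x i.1 := by
      funext i; rw [Function.update_of_ne]; have := i.2; omega
    have h2 : ∏ l ∈ Finset.Ico R T', pk (fun k => Function.update (extd hd x) T' e (l - r k))
        (Function.update (extd hd x) T' e l) =
        ∏ l ∈ Finset.Ico R T', pk (fun k => extd hd x (l - r k)) (extd hd x l) := by
      refine Finset.prod_congr rfl fun l hl => ?_
      have := Finset.mem_Ico.mp hl
      rw [Function.update_of_ne (by omega)]
      congr 1
      funext k
      rw [Function.update_of_ne (by omega)]
    have h3 : (fun k => Function.update (extd hd x) T' e (T' - r k)) =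
        fun k => extd hd x (T' - r k) := by
      funext k
      have := hrpos k
      rw [Function.update_of_ne (by omega)]
    rw [h1, h2, h3, Function.update_self]
    ring

end ops

section win
variable {d n R : ℕ} {r : Fin n → ℕ} {pk : (Fin n → Fin d) → Fin d → ℝ}

/-- Shift the window and append a token. -/
def nxt (Z : Fin R → Fin d) (e : Fin d) : Fin R → Fin d :=
  fun i => if h : i.1 + 1 < R then Z ⟨i.1 + 1, h⟩ else e

theorem windowMatrix_eq (hR : 0 < R) (hrpos : ∀ i, 0 < r i) (Z' Z : Fin R → Fin d) :
    windowMatrix d n R hR r hrpos pk Z' Z =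
      ∑ e, if Z' = nxt Z e then pk (fun k => Z ⟨R - r k, Nat.sub_lt hR (hrpos k)⟩) e else 0 := by
  have key : ∀ e, Z' = nxt Z e ↔ (e = Z' ⟨R - 1, Nat.sub_lt hR Nat.one_pos⟩ ∧
      ∀ j : Fin (R - 1), Z' ⟨j.1, lt_of_lt_of_le j.2 (Nat.sub_le R 1)⟩ =
        Z ⟨j.1 + 1, by have := j.2; omega⟩) := by
    intro e
    constructor
    · intro h
      constructor
      · rw [h]
        have : ¬ (R - 1 + 1 < R) := by omega
        simp [nxt, this]
      · intro j
        rw [h]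
        have : j.1 + 1 < R := by have := j.2; omega
        simp [nxt, this]
    · rintro ⟨h1, h2⟩
      funext i
      by_cases hi : i.1 + 1 < R
      · simp only [nxt, hi, dif_pos]
        exact h2 ⟨i.1, by omega⟩
      · simp only [nxt, hi, dif_neg, not_false_eq_true]
        rw [h1]
        congr 1
        apply Fin.ext
        have := i.2
        simp only
        omega
  simp only [key, windowMatrix, Matrix.of_apply]
  split_ifs with h
  · simp [h]
  · rw [eq_comm]
    apply Finset.sum_eq_zero
    intro e _
    rw [if_neg (fun hh => h hh.2)]

theorem windowMatrix_sum (hR : 0 < R) (hrpos : ∀ i, 0 < r i) (Z : Fin R → Fin d)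
    (h : (Fin R → Fin d) → ℝ) :
    ∑ Z', windowMatrix d n R hR r hrpos pk Z' Z * h Z' =
      ∑ e, pk (fun k => Z ⟨R - r k, Nat.sub_lt hR (hrpos k)⟩) e * h (nxt Z e) := by
  simp only [windowMatrix_eq, Finset.sum_mul]
  rw [Finset.sum_comm]
  refine Finset.sum_congr rfl fun e _ => ?_
  simp [ite_mul]

theorem top_one (hd : 0 < d) (hR : 0 < R) (hrpos : ∀ i, 0 < r i) (Z : Fin R → Fin d)
    {g : (ℕ → Fin d) → ℝ} (hg : Dep R g) :
    stepOp r pk R (fun x => g (shn 1 x)) (extd hd Z) =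
      ∑ Z', windowMatrix d n R hR r hrpos pk Z' Z * g (extd hd Z') := by
  rw [windowMatrix_sum]
  unfold stepOp
  refine Finset.sum_congr rfl fun e _ => ?_
  congr 1
  · congr 1
    funext k
    rw [extd_lt hd Z (Nat.sub_lt hR (hrpos k))]
  · apply hg
    intro i hi
    rw [extd_lt hd _ hi]
    simp only [shn, nxt]
    split_ifs with h
    · rw [Function.update_of_ne (by omega), extd_lt hd _ h]
    · have : i + 1 = R := by omega
      rw [this, Function.update_self]

theorem stat_step (hd : 0 < d) (hR : 0 < R) (hrpos : ∀ i, 0 < r i) (μ : (Fin R → Fin d) → ℝ)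
    (hstat : ∀ Z', μ Z' = ∑ Z, windowMatrix d n R hR r hrpos pk Z' Z * μ Z)
    {g : (ℕ → Fin d) → ℝ} (hg : Dep R g) :
    ∑ Z, μ Z * stepOp r pk R (fun x => g (shn 1 x)) (extd hd Z) = ∑ Z, μ Z * g (extd hd Z) := by
  conv_rhs =>
    enter [2, Z']
    rw [hstat Z', Finset.sum_mul]
  rw [Finset.sum_comm]
  refine Finset.sum_congr rfl fun Z _ => ?_
  rw [top_one hd hR hrpos Z hg, Finset.mul_sum]
  refine Finset.sum_congr rfl fun Z' _ => ?_
  ring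

theorem stat_iter (hd : 0 < d) (hR : 0 < R) (hrpos : ∀ i, 0 < r i) (hrR : ∀ i, r i ≤ R)
    (μ : (Fin R → Fin d) → ℝ)
    (hstat : ∀ Z', μ Z' = ∑ Z, windowMatrix d n R hR r hrpos pk Z' Z * μ Z)
    {g : (ℕ → Fin d) → ℝ} (hg : Dep R g) (k : ℕ) :
    ∑ Z, μ Z * iterOp r pk R k (fun x => g (shn k x)) (extd hd Z) = ∑ Z, μ Z * g (extd hd Z) := by
  induction k with
  | zero => rfl
  | succ k ih =>
    rw [top_succ hrR, stat_step hd hR hrpos μ hstat, ih]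
    exact iterOp_dep hrpos k hR hg.shift

theorem contract (hR : 0 < R) (hrpos : ∀ i, 0 < r i)
    (μ : (Fin R → Fin d) → ℝ) (hμpos : ∀ Z, 0 < μ Z)
    (lam : ℝ) (hlam0 : 0 ≤ lam)
    (hop : ∀ v : (Fin R → Fin d) → ℝ,
      Real.sqrt (∑ Z', Matrix.mulVec (specA d n R hR r hrpos pk μ) v Z' ^ 2)
        ≤ lam * Real.sqrt (∑ Z, v Z ^ 2))
    (φ : (Fin R → Fin d) → ℝ) (hφ : ∑ Z, μ Z * φ Z = 0) :
    ∑ Z, μ Z * (∑ Z', windowMatrix d n R hR r hrpos pk Z' Z * φ Z') ^ 2 ≤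
      lam ^ 2 * ∑ Z, μ Z * φ Z ^ 2 := by
  set A := specA d n R hR r hrpos pk μ with hA
  set u : (Fin R → Fin d) → ℝ :=
    fun Z => Real.sqrt (μ Z) * ∑ Z', windowMatrix d n R hR r hrpos pk Z' Z * φ Z' with hu
  set v : (Fin R → Fin d) → ℝ := fun Z => Real.sqrt (μ Z) * φ Z with hv
  have hs : ∀ Z, Real.sqrt (μ Z) ^ 2 = μ Z := fun Z => Real.sq_sqrt (hμpos Z).le
  have hsp : ∀ Z, 0 < Real.sqrt (μ Z) := fun Z => Real.sqrt_pos.mpr (hμpos Z)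
  have hu2 : ∑ Z, μ Z * (∑ Z', windowMatrix d n R hR r hrpos pk Z' Z * φ Z') ^ 2 =
      ∑ Z, u Z ^ 2 := by
    refine Finset.sum_congr rfl fun Z _ => ?_
    simp only [hu, mul_pow, hs]
  have hv2 : ∑ Z, μ Z * φ Z ^ 2 = ∑ Z, v Z ^ 2 := by
    refine Finset.sum_congr rfl fun Z _ => ?_
    simp only [hv, mul_pow, hs]
  have hAe : ∀ Z' Z, A Z' Z = (Real.sqrt (μ Z'))⁻¹ * windowMatrix d n R hR r hrpos pk Z' Z *
      Real.sqrt (μ Z) - Real.sqrt (μ Z') * Real.sqrt (μ Z) := by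
    intro Z' Z
    simp [hA, specA, Matrix.vecMulVec_apply, Matrix.mul_diagonal, Matrix.diagonal_mul]
  have hAT : ∀ Z, ∑ Z', A Z' Z * v Z' = u Z := by
    intro Z
    have : ∀ Z', A Z' Z * v Z' = Real.sqrt (μ Z) * (windowMatrix d n R hR r hrpos pk Z' Z * φ Z')
        - Real.sqrt (μ Z) * (μ Z' * φ Z') := by
      intro Z'
      rw [hAe, ← hs Z']
      simp only [hv, hs]
      have := (hsp Z').ne'
      have h2 : (Real.sqrt (μ Z'))⁻¹ * Real.sqrt (μ Z') = 1 := inv_mul_cancel₀ this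
      have h3 := hs Z'
      calc _ = ((Real.sqrt (μ Z'))⁻¹ * Real.sqrt (μ Z')) * Real.sqrt (μ Z) *
            (windowMatrix d n R hR r hrpos pk Z' Z * φ Z') -
            Real.sqrt (μ Z) * (Real.sqrt (μ Z') ^ 2 * φ Z') := by ring
        _ = _ := by rw [h2, h3]; ring
    simp only [this, Finset.sum_sub_distrib, ← Finset.mul_sum, hφ, hu]
    ring
  have hinner : ∑ Z, u Z ^ 2 = ∑ Z', Matrix.mulVec A u Z' * v Z' := by
    calc ∑ Z, u Z ^ 2 = ∑ Z, ∑ Z', u Z * (A Z' Z * v Z') := by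
          refine Finset.sum_congr rfl fun Z _ => ?_
          rw [← Finset.mul_sum, hAT, sq]
      _ = _ := by
          rw [Finset.sum_comm]
          refine Finset.sum_congr rfl fun Z' _ => ?_
          simp only [Matrix.mulVec, dotProduct, Finset.sum_mul]
          refine Finset.sum_congr rfl fun Z _ => ?_
          ring
  have hcs := Real.sum_mul_le_sqrt_mul_sqrt Finset.univ (Matrix.mulVec A u) v
  have hop' := hop u
  rw [hu2, hv2]
  set U := Real.sqrt (∑ Z, u Z ^ 2) with hU
  set V := Real.sqrt (∑ Z, v Z ^ 2) with hV
  have hU2 : U ^ 2 = ∑ Z, u Z ^ 2 := Real.sq_sqrt (Finset.sum_nonneg fun _ _ => sq_nonneg _)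
  have hV2 : V ^ 2 = ∑ Z, v Z ^ 2 := Real.sq_sqrt (Finset.sum_nonneg fun _ _ => sq_nonneg _)
  have hU0 : 0 ≤ U := Real.sqrt_nonneg _
  have hV0 : 0 ≤ V := Real.sqrt_nonneg _
  have h1 : U ^ 2 ≤ lam * U * V := by
    rw [hU2, hinner]
    exact hcs.trans (mul_le_mul_of_nonneg_right hop' hV0)
  rw [← hU2, ← hV2, ← mul_pow]
  rcases hU0.eq_or_lt with h0 | h0
  · rw [← h0]; simpa using sq_nonneg (lam * V)
  · have : U ≤ lam * V := by
      have : U * U ≤ U * (lam * V) := by nlinarith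
      exact le_of_mul_le_mul_left this h0
    exact pow_le_pow_left₀ hU0 this 2

theorem contract_iter (hd : 0 < d) (hR : 0 < R) (hrpos : ∀ i, 0 < r i) (hrR : ∀ i, r i ≤ R)
    (hpk1 : ∀ Y, ∑ e, pk Y e = 1)
    (μ : (Fin R → Fin d) → ℝ) (hμpos : ∀ Z, 0 < μ Z)
    (hstat : ∀ Z', μ Z' = ∑ Z, windowMatrix d n R hR r hrpos pk Z' Z * μ Z)
    (lam : ℝ) (hlam0 : 0 ≤ lam)
    (hop : ∀ v : (Fin R → Fin d) → ℝ,
      Real.sqrt (∑ Z', Matrix.mulVec (specA d n R hR r hrpos pk μ) v Z' ^ 2)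
        ≤ lam * Real.sqrt (∑ Z, v Z ^ 2))
    {g : (ℕ → Fin d) → ℝ} (hg : Dep R g) (hg0 : ∑ Z, μ Z * g (extd hd Z) = 0) (k : ℕ) :
    ∑ Z, μ Z * (iterOp r pk R k (fun x => g (shn k x)) (extd hd Z)) ^ 2 ≤
      (lam ^ k) ^ 2 * ∑ Z, μ Z * g (extd hd Z) ^ 2 := by
  induction k with
  | zero =>
    simp only [pow_zero, one_pow, one_mul]
    exact le_rfl
  | succ k ih =>
    have hD : Dep R (iterOp r pk R k (fun x => g (shn k x))) := iterOp_dep hrpos k hR hg.shift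
    rw [top_succ hrR]
    simp only [top_one hd hR hrpos _ hD]
    refine (contract hR hrpos μ hμpos lam hlam0 hop
      (fun Z => iterOp r pk R k (fun x => g (shn k x)) (extd hd Z)) ?_).trans ?_
    · rw [stat_iter hd hR hrpos hrR μ hstat hg, hg0]
    · calc _ ≤ lam ^ 2 * ((lam ^ k) ^ 2 * ∑ Z, μ Z * g (extd hd Z) ^ 2) :=
            mul_le_mul_of_nonneg_left ih (sq_nonneg _)
        _ = _ := by ring

end win

section det

theorem det_bound {α : Type*} [Fintype α] (ν c e : α → ℝ) (m N : ℝ) (hm : 0 < m) (hN : 0 < N)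
    (he : ∀ w, 0 < e w) (hν : ∀ w, m ≤ ν w) (hc : ∀ w, 0 ≤ c w) (hcN : ∑ w, c w = N) :
    ∑ w, |ν w * e w / (∑ w, ν w * e w) - c w * e w / (∑ w, c w * e w)| ≤
      2 / m * Real.sqrt (∑ w, (c w / N - ν w) ^ 2) := by
  set A := ∑ w, ν w * e w with hA
  set B := ∑ w, c w * e w with hB
  have hν0 : ∀ w, 0 < ν w := fun w => hm.trans_le (hν w)
  have hne : Nonempty α := by
    by_contra h
    rw [not_nonempty_iff] at h
    simp at hcN
    linarith
  have hA0 : 0 < A := Finset.sum_pos (fun w _ => mul_pos (hν0 w) (he w)) Finset.univ_nonempty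
  have hB0 : 0 < B := by
    obtain ⟨w, -, hw⟩ : ∃ w ∈ Finset.univ, 0 < c w := by
      by_contra h
      push Not at h
      have := Finset.sum_nonpos h
      linarith
    exact Finset.sum_pos' (fun w _ => mul_nonneg (hc w) (he w).le)
      ⟨w, Finset.mem_univ _, mul_pos hw (he w)⟩
  set Δ : α → ℝ := fun w => c w / N - ν w with hΔ
  have hBA : B / N - A = ∑ w, Δ w * e w := by
    simp only [hΔ, hA, hB, sub_mul, Finset.sum_sub_distrib, Finset.sum_div]
    congr 1
    refine Finset.sum_congr rfl fun w _ => ?_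
    ring
  set Q := ∑ w, |Δ w| * e w with hQ
  have habs : |B / N - A| ≤ Q := by
    rw [hBA]
    refine (Finset.abs_sum_le_sum_abs _ _).trans (le_of_eq ?_)
    refine Finset.sum_congr rfl fun w _ => ?_
    rw [abs_mul, abs_of_pos (he w)]
  have hpt : ∀ w, |ν w * e w / A - c w * e w / B| ≤
      |Δ w| * e w / A + c w * e w / B * (Q / A) := by
    intro w
    have : ν w * e w / A - c w * e w / B =
        -(Δ w * e w / A) + c w * e w / B * ((B / N - A) / A) := by
      simp only [hΔ]
      field_simp
      ring
    rw [this]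
    refine (abs_add_le _ _).trans ?_
    have hcb : 0 ≤ c w * e w / B := div_nonneg (mul_nonneg (hc w) (he w).le) hB0.le
    rw [abs_neg, abs_div, abs_mul, abs_mul, abs_of_nonneg hcb, abs_div, abs_of_pos hA0,
      abs_of_pos (he w)]
    gcongr
  have h1 : ∑ w, |ν w * e w / A - c w * e w / B| ≤ 2 * (Q / A) := by
    refine (Finset.sum_le_sum fun w _ => hpt w).trans (le_of_eq ?_)
    rw [Finset.sum_add_distrib, ← Finset.sum_div, ← Finset.sum_mul, ← Finset.sum_div, ← hB, ← hQ,
      div_self hB0.ne']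
    ring
  have heA : ∀ w, e w * m ≤ A := fun w => by
    calc e w * m ≤ ν w * e w := by rw [mul_comm]; exact mul_le_mul_of_nonneg_right (hν w) (he w).le
      _ ≤ A := Finset.single_le_sum (f := fun w => ν w * e w)
        (fun w _ => (mul_pos (hν0 w) (he w)).le) (Finset.mem_univ w)
  have he2 : ∑ w, e w ^ 2 ≤ (A / m) ^ 2 := by
    have : ∀ w, e w ^ 2 ≤ ν w * e w * (A / m ^ 2) := by
      intro w
      have h3 := heA w
      have h4 := hν w
      rw [mul_div_assoc', le_div_iff₀ (by positivity)]
      have h5 : 0 < e w := he w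
      calc e w ^ 2 * m ^ 2 = (m * e w) * (e w * m) := by ring
        _ ≤ (ν w * e w) * A := by
          apply mul_le_mul _ h3 (by positivity) (mul_pos (hν0 w) h5).le
          exact mul_le_mul_of_nonneg_right h4 h5.le
    calc _ ≤ ∑ w, ν w * e w * (A / m ^ 2) := Finset.sum_le_sum fun w _ => this w
      _ = _ := by rw [← Finset.sum_mul, ← hA]; field_simp
  have hQle : Q ≤ Real.sqrt (∑ w, Δ w ^ 2) * (A / m) := by
    have := Real.sum_mul_le_sqrt_mul_sqrt Finset.univ (fun w => |Δ w|) e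
    simp only [sq_abs] at this
    refine this.trans (mul_le_mul_of_nonneg_left ?_ (Real.sqrt_nonneg _))
    rw [← Real.sqrt_sq (by positivity : 0 ≤ A / m)]
    exact Real.sqrt_le_sqrt he2
  refine h1.trans ?_
  calc 2 * (Q / A) ≤ 2 * (Real.sqrt (∑ w, Δ w ^ 2) * (A / m) / A) := by gcongr
    _ = 2 / m * Real.sqrt (∑ w, Δ w ^ 2) := by
      clear_value Δ
      field_simp

theorem sum_b_bound (M L : ℕ) (C lam : ℝ) (hC : 0 ≤ C) (hlam0 : 0 ≤ lam) (hlam1 : lam < 1) :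
    ∑ j ∈ Finset.range L, (if j < M then (2 : ℝ) else C * lam ^ (j - M)) ≤
      2 * M + (1 - lam)⁻¹ * C := by
  have hg : ∀ k, ∑ j ∈ Finset.range k, lam ^ j ≤ (1 - lam)⁻¹ := fun k => by
    rw [← tsum_geometric_of_lt_one hlam0 hlam1]
    exact (summable_geometric_of_lt_one hlam0 hlam1).sum_le_tsum _ (fun _ _ => by positivity)
  have hb0 : ∀ j, 0 ≤ (if j < M then (2 : ℝ) else C * lam ^ (j - M)) := fun j => by
    split_ifs <;> positivity
  calc _ ≤ ∑ j ∈ Finset.range (M + L), (if j < M then (2 : ℝ) else C * lam ^ (j - M)) :=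
        Finset.sum_le_sum_of_subset_of_nonneg (Finset.range_mono (by omega)) fun j _ _ => hb0 j
    _ = ∑ j ∈ Finset.range M, (2 : ℝ) + ∑ j ∈ Finset.range L, C * lam ^ j := by
        rw [Finset.sum_range_add]
        congr 1
        · exact Finset.sum_congr rfl fun j hj => if_pos (Finset.mem_range.mp hj)
        · refine Finset.sum_congr rfl fun j _ => ?_
          rw [if_neg (by omega)]
          congr 2
          omega
    _ ≤ _ := by
        rw [← Finset.mul_sum]
        have := mul_le_mul_of_nonneg_left (hg L) hC
        simp only [Finset.sum_const, Finset.card_range, nsmul_eq_mul]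
        linarith

theorem sum_dist_bound (M L : ℕ) (b : ℕ → ℝ) (hb : ∀ j, 0 ≤ b j) (l : ℕ) (hl : l < L) :
    ∑ l' ∈ Finset.Ico M L, b ((l - l') + (l' - l)) ≤ 2 * ∑ j ∈ Finset.range L, b j := by
  have h1 : ∑ l' ∈ (Finset.Ico M L).filter (fun l' => l' ≤ l), b ((l - l') + (l' - l)) ≤
      ∑ j ∈ Finset.range L, b j := by
    have : ∑ l' ∈ (Finset.Ico M L).filter (fun l' => l' ≤ l), b ((l - l') + (l' - l)) =
        ∑ j ∈ ((Finset.Ico M L).filter (fun l' => l' ≤ l)).image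
          (fun l' => (l - l') + (l' - l)), b j := by
      rw [Finset.sum_image]
      intro x hx y hy hxy
      simp at hx hy hxy
      omega
    rw [this]
    refine Finset.sum_le_sum_of_subset_of_nonneg ?_ fun j _ _ => hb j
    intro j hj
    simp at hj ⊢
    omega
  have h2 : ∑ l' ∈ (Finset.Ico M L).filter (fun l' => ¬ l' ≤ l), b ((l - l') + (l' - l)) ≤
      ∑ j ∈ Finset.range L, b j := by
    have : ∑ l' ∈ (Finset.Ico M L).filter (fun l' => ¬ l' ≤ l), b ((l - l') + (l' - l)) =
        ∑ j ∈ ((Finset.Ico M L).filter (fun l' => ¬ l' ≤ l)).image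
          (fun l' => (l - l') + (l' - l)), b j := by
      rw [Finset.sum_image]
      intro x hx y hy hxy
      simp at hx hy hxy
      omega
    rw [this]
    refine Finset.sum_le_sum_of_subset_of_nonneg ?_ fun j _ _ => hb j
    intro j hj
    simp at hj ⊢
    omega
  rw [← Finset.sum_filter_add_sum_filter_not (Finset.Ico M L) (fun l' => l' ≤ l)]
  linarith

end det

section main
variable {d n R : ℕ} {r : Fin n → ℕ} {pk : (Fin n → Fin d) → Fin d → ℝ}

theorem markov (hpk1 : ∀ Y, ∑ e, pk Y e = 1) (hrpos : ∀ i, 0 < r i) (hR : 0 < R)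
    (hrR : ∀ i, r i ≤ R) (t k j rest : ℕ) {H g0 : (ℕ → Fin d) → ℝ}
    (hH : Dep (R + t) H) (hg0 : Dep (R + j) g0) :
    iterOp r pk R (t + (k + j) + rest) (fun x => H x * g0 (shn (k + t) x)) =
    iterOp r pk R (t + (k + j) + rest) (fun x => H x *
      iterOp r pk R k (fun y => iterOp r pk R j g0 (shn k y)) (shn t x)) := by
  have hf : Dep R (iterOp r pk R j g0) := iterOp_dep hrpos j hR hg0
  have hφ : Dep R (iterOp r pk R k (fun y => iterOp r pk R j g0 (shn k y))) :=
    iterOp_dep hrpos k hR hf.shift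
  have hR1 : Dep (R + t) (fun x => H x *
      iterOp r pk R k (fun y => iterOp r pk R j g0 (shn k y)) (shn t x)) := hH.mul hφ.shift
  have hL1 : Dep (R + (t + (k + j))) (fun x => H x * g0 (shn (k + t) x)) :=
    (hH.mono (by omega)).mul ((hg0.shift (t := k + t)).mono (by omega))
  rw [iterOp_add (t + (k + j)) rest, iterOp_triv hpk1 rest hL1, add_assoc t (k + j) rest,
    iterOp_add t (k + j), iterOp_add t (k + j + rest), iterOp_triv hpk1 _ hR1, iterOp_mul _ hH]
  congr 1
  funext x
  congr 1
  have h1 : (fun x : ℕ → Fin d => g0 (shn (k + t) x)) =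
      fun x => (fun y => g0 (shn k y)) (shn t x) := by
    funext x; simp only [shn_shn]
  rw [h1, iterOp_shift hrR (k + j) le_rfl t (fun y => g0 (shn k y)), iterOp_add k j, iterOp_shift hrR j le_rfl k]

theorem exp_stat (hd : 0 < d) (hR : 0 < R) (hrpos : ∀ i, 0 < r i) (hrR : ∀ i, r i ≤ R)
    (hpk1 : ∀ Y, ∑ e, pk Y e = 1)
    (μ : (Fin R → Fin d) → ℝ)
    (hstat : ∀ Z', μ Z' = ∑ Z, windowMatrix d n R hR r hrpos pk Z' Z * μ Z)
    {g : (ℕ → Fin d) → ℝ} (hg : Dep R g) (t T : ℕ) (hRT : R ≤ T) (hT : R + t ≤ T) :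
    ∑ x : Fin T → Fin d, ngramProb d n R T r pk μ hRT x * g (shn t (extd hd x)) =
      ∑ Z, μ Z * g (extd hd Z) := by
  obtain ⟨u, rfl⟩ := Nat.exists_eq_add_of_le hT
  rw [bridge hd hR hrpos μ (t + u) (R + t + u) (by omega) hRT (fun x => g (shn t x)),
    iterOp_add, iterOp_triv hpk1 u hg.shift, stat_iter hd hR hrpos hrR μ hstat hg]

theorem ngramProb_nonneg (hpk0 : ∀ Y e, 0 ≤ pk Y e) (T : ℕ) (init : (Fin R → Fin d) → ℝ)
    (h0 : ∀ Z, 0 ≤ init Z) (hRT : R ≤ T) (x : Fin T → Fin d) :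
    0 ≤ ngramProb d n R T r pk init hRT x :=
  mul_nonneg (h0 _) (Finset.prod_nonneg fun _ _ => hpk0 _ _)

theorem ngramProb_sum (hd : 0 < d) (hR : 0 < R) (hrpos : ∀ i, 0 < r i)
    (hpk1 : ∀ Y, ∑ e, pk Y e = 1) (T : ℕ) (init : (Fin R → Fin d) → ℝ)
    (h1 : ∑ Z, init Z = 1) (hRT : R ≤ T) :
    ∑ x : Fin T → Fin d, ngramProb d n R T r pk init hRT x = 1 := by
  have := bridge (pk := pk) hd hR hrpos init (T - R) T (by omega) hRT (fun _ => 1)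
  rw [iterOp_const hpk1] at this
  simpa [h1] using this

theorem change_measure (hd : 0 < d) (hR : 0 < R) (hrpos : ∀ i, 0 < r i)
    (hpk0 : ∀ Y e, 0 ≤ pk Y e) (hpk1 : ∀ Y, ∑ e, pk Y e = 1)
    (μ0 : (Fin R → Fin d) → ℝ) (hμ01 : ∑ Z, μ0 Z = 1)
    (μ : (Fin R → Fin d) → ℝ) (hμpos : ∀ Z, 0 < μ Z) (hμ1 : ∑ Z, μ Z = 1)
    (T : ℕ) (hRT : R ≤ T) (G : (Fin T → Fin d) → ℝ) :
    ∑ x : Fin T → Fin d, ngramProb d n R T r pk μ0 hRT x * G x ≤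
      Real.sqrt (chiSq μ0 μ + 1) *
        Real.sqrt (∑ x : Fin T → Fin d, ngramProb d n R T r pk μ hRT x * G x ^ 2) := by
  set q := ngramProb d n R T r pk μ hRT with hq
  set ρ : (ℕ → Fin d) → ℝ := fun y => μ0 (fun i => y i.1) / μ (fun i => y i.1) with hρ
  have hq0 : ∀ x, 0 ≤ q x := ngramProb_nonneg hpk0 T μ (fun Z => (hμpos Z).le) hRT
  have hpq : ∀ x, ngramProb d n R T r pk μ0 hRT x = q x * ρ (extd hd x) := by
    intro x
    rw [hq, ngramProb_eq hd, ngramProb_eq hd]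
    simp only [hρ]
    have := (hμpos (fun i => extd hd x i.1)).ne'
    field_simp
  have hchi : ∑ x, q x * ρ (extd hd x) ^ 2 = chiSq μ0 μ + 1 := by
    have hdep : Dep R (fun y => ρ y ^ 2) := by
      intro x y hxy
      have : (fun i : Fin R => x i.1) = fun i => y i.1 := funext fun i => hxy _ i.2
      simp only [hρ, this]
    rw [hq, bridge hd hR hrpos μ (T - R) T (by omega) hRT (fun y => ρ y ^ 2),
      iterOp_triv hpk1 _ hdep]
    have h1 : ∀ Z : Fin R → Fin d, (fun i : Fin R => extd hd Z i.1) = Z := by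
      intro Z; funext i; rw [extd_lt hd Z i.2]
    have h2 : ∀ Z, μ Z * ρ (extd hd Z) ^ 2 = (μ0 Z - μ Z) ^ 2 / μ Z + (2 * μ0 Z - μ Z) := by
      intro Z
      simp only [hρ, h1]
      have := (hμpos Z).ne'
      field_simp
      ring
    simp only [h2, Finset.sum_add_distrib, Finset.sum_sub_distrib, ← Finset.mul_sum, hμ01, hμ1,
      chiSq]
    norm_num
  have hcs := Real.sum_mul_le_sqrt_mul_sqrt Finset.univ
    (fun x => Real.sqrt (q x) * ρ (extd hd x)) (fun x => Real.sqrt (q x) * G x)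
  simp only [mul_pow, Real.sq_sqrt (hq0 _), hchi] at hcs
  refine le_trans (le_of_eq ?_) hcs
  refine Finset.sum_congr rfl fun x _ => ?_
  rw [hpq]
  have := Real.mul_self_sqrt (hq0 x)
  calc _ = (Real.sqrt (q x) * Real.sqrt (q x)) * ρ (extd hd x) * G x := by rw [this]
    _ = _ := by ring

/-- Indicator of the window value `w` at position `l`. -/
noncomputable def ind (S : Finset ℕ) (l : ℕ) (w : Fin d × ({s // s ∈ S} → Fin d))
    (x : ℕ → Fin d) : ℝ := if wind S x l = w then 1 else 0

theorem ind_sum (S : Finset ℕ) (l : ℕ) (x : ℕ → Fin d) : ∑ w, ind S l w x = 1 := by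
  simp [ind]

theorem ind_nonneg (S : Finset ℕ) (l : ℕ) (w : Fin d × ({s // s ∈ S} → Fin d))
    (x : ℕ → Fin d) : 0 ≤ ind S l w x := by
  unfold ind; split_ifs <;> norm_num

theorem ind_dep (S : Finset ℕ) (l : ℕ) (w : Fin d × ({s // s ∈ S} → Fin d)) :
    Dep (l + 1) (ind S l w) := by
  intro x y hxy
  have : wind S x l = wind S y l := by
    simp only [wind]
    rw [hxy l (by omega)]
    congr 1
    funext s
    exact hxy _ (by omega)
  simp only [ind, this]

theorem ind_shift (S : Finset ℕ) (M s : ℕ) (hS : ∀ i ∈ S, i ≤ M)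
    (w : Fin d × ({s // s ∈ S} → Fin d)) (x : ℕ → Fin d) :
    ind S (M + s) w x = ind S M w (shn s x) := by
  have : wind S x (M + s) = wind S (shn s x) M := by
    simp only [wind, shn]
    congr 1
    funext i
    have := hS i.1 i.2
    congr 1
    omega
  simp only [ind, this]

theorem inner_near (S : Finset ℕ) (l l' : ℕ) (ν : Fin d × ({s // s ∈ S} → Fin d) → ℝ)
    (hν : ∀ w, 0 ≤ ν w) (hν1 : ∑ w, ν w = 1) (x : ℕ → Fin d) :
    ∑ w, (ind S l w x - ν w) * (ind S l' w x - ν w) ≤ 1 + ∑ w, ν w ^ 2 := by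
  have : ∀ w, (ind S l w x - ν w) * (ind S l' w x - ν w) ≤ ind S l w x + ν w ^ 2 := by
    intro w
    have h1 := hν w
    have h2 := ind_nonneg S l w x
    have h3 := ind_nonneg S l' w x
    have h4 : ind S l' w x ≤ 1 := by unfold ind; split_ifs <;> norm_num
    nlinarith [mul_nonneg h1 h2, mul_nonneg h1 h3, mul_nonneg h2 (sub_nonneg.mpr h4)]
  refine (Finset.sum_le_sum fun w _ => this w).trans (le_of_eq ?_)
  rw [Finset.sum_add_distrib, ind_sum]

theorem sum_sq_le_one {α : Type*} [Fintype α] (ν : α → ℝ)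
    (hν : ∀ w, 0 ≤ ν w) (hν1 : ∑ w, ν w = 1) : ∑ w, ν w ^ 2 ≤ 1 := by
  rw [← hν1]
  refine Finset.sum_le_sum fun w _ => ?_
  have : ν w ≤ 1 := hν1 ▸ Finset.single_le_sum (fun w _ => hν w) (Finset.mem_univ w)
  nlinarith [hν w]

theorem pair_far (hd : 0 < d) (hR : 0 < R) (hrpos : ∀ i, 0 < r i) (hrR : ∀ i, r i ≤ R)
    (hpk0 : ∀ Y e, 0 ≤ pk Y e) (hpk1 : ∀ Y, ∑ e, pk Y e = 1)
    (μ0 : (Fin R → Fin d) → ℝ) (hμ01 : ∑ Z, μ0 Z = 1)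
    (μ : (Fin R → Fin d) → ℝ) (hμpos : ∀ Z, 0 < μ Z) (hμ1 : ∑ Z, μ Z = 1)
    (hstat : ∀ Z', μ Z' = ∑ Z, windowMatrix d n R hR r hrpos pk Z' Z * μ Z)
    (lam : ℝ) (hlam0 : 0 ≤ lam) (hlam1 : lam < 1)
    (hop : ∀ v : (Fin R → Fin d) → ℝ,
      Real.sqrt (∑ Z', Matrix.mulVec (specA d n R hR r hrpos pk μ) v Z' ^ 2)
        ≤ lam * Real.sqrt (∑ Z, v Z ^ 2))
    (M L : ℕ) (hRM : R ≤ M) (S : Finset ℕ) (hS : ∀ i ∈ S, i ≤ M)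
    (ν : Fin d × ({s // s ∈ S} → Fin d) → ℝ) (hν0 : ∀ w, 0 ≤ ν w) (hν1 : ∑ w, ν w = 1)
    (hν : ∀ w, ∑ Z, μ Z * iterOp r pk R (M + 1 - R) (ind S M w) (extd hd Z) = ν w)
    (l l' : ℕ) (hl : M ≤ l) (hll : l + M ≤ l') (hl' : l' < L) (hRL : R ≤ L + 1) :
    ∑ x : Fin (L + 1) → Fin d, ngramProb d n R (L + 1) r pk μ0 hRL x *
      ∑ w, (ind S l w (extd hd x) - ν w) * (ind S l' w (extd hd x) - ν w) ≤
      Real.sqrt (chiSq μ0 μ + 1) * lam ^ (l' - l - M) := by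
  obtain ⟨j, hj⟩ : ∃ j, M + 1 = R + j := ⟨M + 1 - R, by omega⟩
  obtain ⟨t, ht⟩ : ∃ t, l + 1 = R + t := ⟨l + 1 - R, by omega⟩
  obtain ⟨k, hk⟩ : ∃ k, l' = M + (k + t) := ⟨l' - M - t, by omega⟩
  obtain ⟨u, hu⟩ : ∃ u, L + 1 = R + (t + (k + j) + u) := ⟨L + 1 - R - (t + (k + j)), by omega⟩
  rw [show M + 1 - R = j by omega] at hν
  have hkle : l' - l - M ≤ k := by omega
  set g0 : Fin d × ({s // s ∈ S} → Fin d) → (ℕ → Fin d) → ℝ :=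
    fun w x => ind S M w x - ν w with hg0
  have hg0d : ∀ w, Dep (R + j) (g0 w) := by
    intro w x y hxy
    simp only [hg0]
    rw [ind_dep S M w x y (by rwa [hj])]
  set f : Fin d × ({s // s ∈ S} → Fin d) → (ℕ → Fin d) → ℝ :=
    fun w => iterOp r pk R j (g0 w) with hf
  have hfd : ∀ w, Dep R (f w) := fun w => iterOp_dep hrpos j hR (hg0d w)
  set F : Fin d × ({s // s ∈ S} → Fin d) → (ℕ → Fin d) → ℝ :=
    fun w => iterOp r pk R j (ind S M w) with hF
  have hfF : ∀ w x, f w x = F w x - ν w := by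
    intro w x
    simp only [hf, hg0, hF]
    rw [iterOp_sub hpk1]
  have hF0 : ∀ w x, 0 ≤ F w x := fun w => iterOp_nonneg hpk0 j (ind_nonneg S M w)
  have hFs : ∀ x, ∑ w, F w x = 1 := by
    intro x
    have := congrFun (iterOp_sum (r := r) (pk := pk) Finset.univ j R (fun w => ind S M w)) x
    simp only [ind_sum, iterOp_const hpk1] at this
    exact this.symm
  have hF1 : ∀ w x, F w x ≤ 1 := fun w x =>
    hFs x ▸ Finset.single_le_sum (fun w _ => hF0 w x) (Finset.mem_univ w)
  have hmean : ∀ w, ∑ Z, μ Z * f w (extd hd Z) = 0 := by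
    intro w
    simp only [hfF, mul_sub, Finset.sum_sub_distrib, ← Finset.sum_mul, hμ1]
    rw [hν w]; ring
  have hvar : ∀ w, ∑ Z, μ Z * f w (extd hd Z) ^ 2 ≤ ν w - ν w ^ 2 := by
    intro w
    have : ∀ Z, μ Z * f w (extd hd Z) ^ 2 ≤
        (1 - 2 * ν w) * (μ Z * F w (extd hd Z)) + μ Z * ν w ^ 2 := by
      intro Z
      rw [hfF]
      have h1 := hF0 w (extd hd Z)
      have h2 := hF1 w (extd hd Z)
      have h3 := mul_nonneg (hμpos Z).le (mul_nonneg h1 (sub_nonneg.mpr h2))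
      nlinarith
    refine (Finset.sum_le_sum fun Z _ => this Z).trans (le_of_eq ?_)
    rw [Finset.sum_add_distrib, ← Finset.mul_sum, ← Finset.sum_mul, hν w, hμ1]
    ring
  set φ : Fin d × ({s // s ∈ S} → Fin d) → (ℕ → Fin d) → ℝ :=
    fun w => iterOp r pk R k (fun y => f w (shn k y)) with hφ
  have hφd : ∀ w, Dep R (φ w) := fun w => iterOp_dep hrpos k hR (hfd w).shift
  -- Markov property
  have hmk : ∑ x : Fin (L + 1) → Fin d, ngramProb d n R (L + 1) r pk μ0 hRL x *
      ∑ w, (ind S l w (extd hd x) - ν w) * (ind S l' w (extd hd x) - ν w) =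
      ∑ x : Fin (L + 1) → Fin d, ngramProb d n R (L + 1) r pk μ0 hRL x *
      ∑ w, (ind S l w (extd hd x) - ν w) * φ w (shn t (extd hd x)) := by
    simp only [Finset.mul_sum]
    rw [Finset.sum_comm, Finset.sum_comm (s := (Finset.univ : Finset (Fin (L + 1) → Fin d)))]
    refine Finset.sum_congr rfl fun w _ => ?_
    have hHd : Dep (R + t) (fun x => ind S l w x - ν w) := by
      intro x y hxy
      simp only
      rw [ind_dep S l w x y (by rwa [ht])]
    have e1 := bridge (pk := pk) hd hR hrpos μ0 _ (L + 1) hu hRL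
      (fun x => (ind S l w x - ν w) * g0 w (shn (k + t) x))
    have e2 := bridge (pk := pk) hd hR hrpos μ0 _ (L + 1) hu hRL
      (fun x => (ind S l w x - ν w) * φ w (shn t x))
    have e3 := markov hpk1 hrpos hR hrR t k j u hHd (hg0d w)
    rw [e3] at e1
    rw [← e1] at e2
    rw [e2]
    refine Finset.sum_congr rfl fun x _ => ?_
    simp only [hg0]
    rw [hk, ind_shift S M (k + t) hS]
  rw [hmk]
  refine (change_measure hd hR hrpos hpk0 hpk1 μ0 hμ01 μ hμpos hμ1 (L + 1) hRL _).trans ?_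
  refine mul_le_mul_of_nonneg_left ?_ (Real.sqrt_nonneg _)
  set s := ∑ w, ν w ^ 2 with hs
  have hs0 : 0 ≤ s := Finset.sum_nonneg fun _ _ => sq_nonneg _
  have hs1 : s ≤ 1 := sum_sq_le_one ν hν0 hν1
  have hpt : ∀ x : Fin (L + 1) → Fin d,
      (∑ w, (ind S l w (extd hd x) - ν w) * φ w (shn t (extd hd x))) ^ 2 ≤
        (1 + s) * ∑ w, φ w (shn t (extd hd x)) ^ 2 := by
    intro x
    refine (Finset.sum_mul_sq_le_sq_mul_sq _ _ _).trans ?_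
    refine mul_le_mul_of_nonneg_right ?_ (Finset.sum_nonneg fun _ _ => sq_nonneg _)
    have := inner_near S l l ν hν0 hν1 (extd hd x)
    exact le_trans (le_of_eq (Finset.sum_congr rfl fun w _ => sq _)) this
  have hq0 : ∀ x, 0 ≤ ngramProb d n R (L + 1) r pk μ hRL x :=
    ngramProb_nonneg hpk0 _ μ (fun Z => (hμpos Z).le) hRL
  have hlk : 0 ≤ lam ^ k := pow_nonneg hlam0 k
  have hfin : ∑ x : Fin (L + 1) → Fin d, ngramProb d n R (L + 1) r pk μ hRL x *
      (∑ w, (ind S l w (extd hd x) - ν w) * φ w (shn t (extd hd x))) ^ 2 ≤ (lam ^ k) ^ 2 := by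
    calc _ ≤ ∑ x : Fin (L + 1) → Fin d, ngramProb d n R (L + 1) r pk μ hRL x *
          ((1 + s) * ∑ w, φ w (shn t (extd hd x)) ^ 2) :=
          Finset.sum_le_sum fun x _ => mul_le_mul_of_nonneg_left (hpt x) (hq0 x)
      _ = (1 + s) * ∑ w, ∑ x : Fin (L + 1) → Fin d, ngramProb d n R (L + 1) r pk μ hRL x *
          φ w (shn t (extd hd x)) ^ 2 := by
          rw [Finset.sum_comm, Finset.mul_sum]
          refine Finset.sum_congr rfl fun x _ => ?_
          rw [← Finset.mul_sum]
          ring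
      _ ≤ (1 + s) * ∑ w, (lam ^ k) ^ 2 * (ν w - ν w ^ 2) := by
          refine mul_le_mul_of_nonneg_left (Finset.sum_le_sum fun w _ => ?_) (by linarith)
          have hsq : Dep R (fun y => φ w y ^ 2) := by
            intro x y hxy
            simp only [hφd w x y hxy]
          rw [exp_stat hd hR hrpos hrR hpk1 μ hstat hsq t (L + 1) hRL (by omega)]
          refine (contract_iter hd hR hrpos hrR hpk1 μ hμpos hstat lam hlam0 hop (hfd w)
            (hmean w) k).trans ?_
          exact mul_le_mul_of_nonneg_left (hvar w) (sq_nonneg _)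
      _ = (lam ^ k) ^ 2 * (1 - s ^ 2) := by
          rw [← Finset.mul_sum, Finset.sum_sub_distrib, hν1, ← hs]
          ring
      _ ≤ _ := by nlinarith [sq_nonneg (lam ^ k), sq_nonneg s]
  refine (Real.sqrt_le_sqrt hfin).trans ?_
  rw [Real.sqrt_sq hlk]
  exact pow_le_pow_of_le_one hlam0 hlam1.le hkle

end main
theorem window_eq {d T : ℕ} {S : Finset ℕ} (hd : 0 < d) (x : Fin T → Fin d) (l : ℕ) (hl : l < T) :
    window d T S x l hl = wind S (extd hd x) l := by
  simp only [window, wind, extd_lt hd x hl]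
  congr 1
  funext s
  rw [extd_lt hd x (lt_of_le_of_lt (Nat.sub_le _ _) hl)]
  rfl

/-- The attention-weighted empirical distribution `ν̂_X` of the pairs
`(x_l, X_{l-S*})` is close in expected ℓ₁ distance to the reweighted stationary distribution
`μ̃_X`: the expected ℓ₁ distance is at most `4((1−λ)⁻¹√(D₀+1) + 4M)^{1/2}/(√L · m)`. -/
theorem statement8
    (d n R M L : ℕ) (hd : 0 < d) (hn : 0 < n) (hR : 0 < R)
    (r : Fin n → ℕ) (hrpos : ∀ i, 0 < r i) (hrmono : StrictMono r)
    (hrR : ∀ i, r i ≤ R) (hRmax : ∃ i, r i = R)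
    (pk : (Fin n → Fin d) → Fin d → ℝ)
    (hpk0 : ∀ Y e, 0 ≤ pk Y e) (hpk1 : ∀ Y, ∑ e, pk Y e = 1)
    (μ0 : (Fin R → Fin d) → ℝ) (hμ00 : ∀ Z, 0 ≤ μ0 Z) (hμ01 : ∑ Z, μ0 Z = 1)
    (μ : (Fin R → Fin d) → ℝ) (hμpos : ∀ Z, 0 < μ Z) (hμ1 : ∑ Z, μ Z = 1)
    (hstat : ∀ Z', μ Z' = ∑ Z, windowMatrix d n R hR r hrpos pk Z' Z * μ Z)
    (lam : ℝ) (hlam0 : 0 ≤ lam) (hlam1 : lam < 1)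
    (hop : ∀ v : (Fin R → Fin d) → ℝ,
      Real.sqrt (∑ Z', Matrix.mulVec (specA d n R hR r hrpos pk μ) v Z' ^ 2)
        ≤ lam * Real.sqrt (∑ Z, v Z ^ 2))
    (hRM : R ≤ M) (hML : 2 * M ≤ L)
    (Sst : Finset ℕ) (hSst : ∀ s ∈ Sst, 1 ≤ s ∧ s ≤ M)
    (a : ℝ) (ha : 0 ≤ a)
    (m : ℝ) (hm0 : 0 < m)
    (hmle : ∀ w, m ≤ windowLaw d (M + 1) Sst (ngramProb d n R (M + 1) r pk μ (by omega)) M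
        (Nat.lt_succ_self M) w)
    (hmmem : ∃ w, windowLaw d (M + 1) Sst (ngramProb d n R (M + 1) r pk μ (by omega)) M
        (Nat.lt_succ_self M) w = m) :
    ∑ x : Fin (L + 1) → Fin d,
        ngramProb d n R (L + 1) r pk μ0 (by omega) x *
          ∑ w : Fin d × ({s // s ∈ Sst} → Fin d),
            |reweighted d M Sst a (ngramProb d n R (M + 1) r pk μ (by omega))
                (parents d (L + 1) Sst x L (Nat.lt_succ_self L)) w -
              ∑ l ∈ (Finset.Ico M L).attach,
                (Real.exp (a * (if parents d (L + 1) Sst x l.1 (icoLtSucc l) =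
                      parents d (L + 1) Sst x L (Nat.lt_succ_self L) then 1 else 0)) /
                    ∑ l' ∈ (Finset.Ico M L).attach,
                      Real.exp (a * (if parents d (L + 1) Sst x l'.1 (icoLtSucc l') =
                          parents d (L + 1) Sst x L (Nat.lt_succ_self L) then 1 else 0))) *
                  (if window d (L + 1) Sst x l.1 (icoLtSucc l) = w then 1 else 0)|
      ≤ 4 * Real.sqrt ((1 - lam)⁻¹ * Real.sqrt (chiSq μ0 μ + 1) + 4 * M) /
          (Real.sqrt L * m) := by
  have hML' : M < L := by omega
  have hL0 : (0 : ℝ) < L := by exact_mod_cast (by omega : 0 < L)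
  have hS : ∀ i ∈ Sst, i ≤ M := fun i hi => (hSst i hi).2
  set q := ngramProb d n R (M + 1) r pk μ (by omega) with hq
  set p := ngramProb d n R (L + 1) r pk μ0 (by omega) with hp
  have hp0 : ∀ x, 0 ≤ p x := ngramProb_nonneg hpk0 _ μ0 hμ00 _
  have hp1 : ∑ x, p x = 1 := ngramProb_sum hd hR hrpos hpk1 _ μ0 hμ01 _
  have hq1 : ∑ x, q x = 1 := ngramProb_sum hd hR hrpos hpk1 _ μ hμ1 _
  set ν : Fin d × ({s // s ∈ Sst} → Fin d) → ℝ :=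
    windowLaw d (M + 1) Sst q M (Nat.lt_succ_self M) with hνdef
  have hν0 : ∀ w, 0 ≤ ν w := fun w => hm0.le.trans (hmle w)
  have hνq : ∀ w, ν w = ∑ x, q x * ind Sst M w (extd hd x) := by
    intro w
    simp only [hνdef, windowLaw]
    refine Finset.sum_congr rfl fun x _ => ?_
    rw [window_eq hd]
    simp [ind]
  have hν1 : ∑ w, ν w = 1 := by
    simp only [hνq]
    rw [Finset.sum_comm]
    simp only [← Finset.mul_sum, ind_sum, mul_one, hq1]
  have hνit : ∀ w, ∑ Z, μ Z * iterOp r pk R (M + 1 - R) (ind Sst M w) (extd hd Z) = ν w := by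
    intro w
    rw [hνq, hq, bridge hd hR hrpos μ (M + 1 - R) (M + 1) (by omega)]
  set C := Real.sqrt (chiSq μ0 μ + 1) with hC
  have hC0 : 0 ≤ C := Real.sqrt_nonneg _
  have hlam' : 0 < 1 - lam := by linarith
  set N : ℝ := ((L - M : ℕ) : ℝ) with hN
  have hN0 : 0 < N := by rw [hN]; exact_mod_cast (by omega : 0 < L - M)
  have hNL : (L : ℝ) ≤ 2 * N := by rw [hN]; exact_mod_cast (by omega : L ≤ 2 * (L - M))
  set cnt : (Fin (L + 1) → Fin d) → Fin d × ({s // s ∈ Sst} → Fin d) → ℝ :=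
    fun x w => ∑ l ∈ Finset.Ico M L, ind Sst l w (extd hd x) with hcnt
  set V : (Fin (L + 1) → Fin d) → ℝ := fun x => ∑ w, (cnt x w / N - ν w) ^ 2 with hV
  have hV0 : ∀ x, 0 ≤ V x := fun x => Finset.sum_nonneg fun _ _ => sq_nonneg _
  -- pointwise bound
  have hpoint : ∀ x : Fin (L + 1) → Fin d,
      ∑ w : Fin d × ({s // s ∈ Sst} → Fin d),
            |reweighted d M Sst a q
                (parents d (L + 1) Sst x L (Nat.lt_succ_self L)) w -
              ∑ l ∈ (Finset.Ico M L).attach,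
                (Real.exp (a * (if parents d (L + 1) Sst x l.1 (icoLtSucc l) =
                      parents d (L + 1) Sst x L (Nat.lt_succ_self L) then 1 else 0)) /
                    ∑ l' ∈ (Finset.Ico M L).attach,
                      Real.exp (a * (if parents d (L + 1) Sst x l'.1 (icoLtSucc l') =
                          parents d (L + 1) Sst x L (Nat.lt_succ_self L) then 1 else 0))) *
                  (if window d (L + 1) Sst x l.1 (icoLtSucc l) = w then 1 else 0)| ≤
        2 / m * Real.sqrt (V x) := by
    intro x
    set F0 := parents d (L + 1) Sst x L (Nat.lt_succ_self L) with hF0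
    set e : Fin d × ({s // s ∈ Sst} → Fin d) → ℝ :=
      fun w => Real.exp (a * (if w.2 = F0 then 1 else 0)) with he
    have hcN : ∑ w, cnt x w = N := by
      simp only [hcnt]
      rw [Finset.sum_comm]
      simp [ind_sum, hN]
    have hdet := det_bound ν (cnt x) e m N hm0 hN0 (fun w => Real.exp_pos _) hmle
      (fun w => Finset.sum_nonneg fun l _ => ind_nonneg _ _ _ _) hcN
    refine le_trans (le_of_eq ?_) hdet
    have hpar : ∀ (T : ℕ) (y : Fin T → Fin d) (l : ℕ) (hl : l < T),
        Real.exp (a * (if parents d T Sst y l hl = F0 then 1 else 0)) =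
          e (wind Sst (extd hd y) l) := by
      intro T y l hl
      rw [← window_eq hd y l hl]
      rfl
    have hwin : ∀ (y : ℕ → Fin d) (l : ℕ), e (wind Sst y l) = ∑ w, ind Sst l w y * e w := by
      intro y l
      simp [ind]
    have hA : ∑ y : Fin (M + 1) → Fin d, q y *
        Real.exp (a * (if parents d (M + 1) Sst y M (Nat.lt_succ_self M) = F0 then 1 else 0)) =
        ∑ w, ν w * e w := by
      simp only [hpar, hwin, hνq, Finset.mul_sum, Finset.sum_mul]
      rw [Finset.sum_comm]
      simp only [mul_assoc]
    have hB : ∑ l' ∈ (Finset.Ico M L).attach,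
        Real.exp (a * (if parents d (L + 1) Sst x l'.1 (icoLtSucc l') = F0 then 1 else 0)) =
        ∑ w, cnt x w * e w := by
      simp only [hpar]
      rw [Finset.sum_attach (Finset.Ico M L) (fun l => e (wind Sst (extd hd x) l))]
      simp only [hwin, hcnt, Finset.sum_mul]
      rw [Finset.sum_comm]
    refine Finset.sum_congr rfl fun w _ => ?_
    congr 1
    congr 1
    · simp only [reweighted]
      rw [hA]
    · rw [hB]
      simp only [hpar, window_eq hd]
      rw [Finset.sum_attach (Finset.Ico M L) (fun l => e (wind Sst (extd hd x) l) /
        (∑ w, cnt x w * e w) * (if wind Sst (extd hd x) l = w then 1 else 0))]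
      simp only [hcnt]
      rw [Finset.sum_mul, Finset.sum_div]
      refine Finset.sum_congr rfl fun l _ => ?_
      unfold ind
      split_ifs with h
      · rw [h]; ring
      · ring
  -- second moment bound
  set b : ℕ → ℝ := fun j => if j < M then (2 : ℝ) else C * lam ^ (j - M) with hb
  have hb0 : ∀ j, 0 ≤ b j := fun j => by
    simp only [hb]; split_ifs <;> positivity
  set c : ℕ → ℕ → ℝ := fun l l' => ∑ x : Fin (L + 1) → Fin d, p x *
      ∑ w, (ind Sst l w (extd hd x) - ν w) * (ind Sst l' w (extd hd x) - ν w) with hc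
  have hcsymm : ∀ l l', c l l' = c l' l := by
    intro l l'
    simp only [hc]
    refine Finset.sum_congr rfl fun x _ => ?_
    congr 1
    exact Finset.sum_congr rfl fun w _ => mul_comm _ _
  have hcnear : ∀ l l', c l l' ≤ 2 := by
    intro l l'
    calc c l l' ≤ ∑ x, p x * 2 := Finset.sum_le_sum fun x _ =>
          mul_le_mul_of_nonneg_left ((inner_near Sst l l' ν hν0 hν1 _).trans
            (by linarith [sum_sq_le_one ν hν0 hν1])) (hp0 x)
      _ = 2 := by rw [← Finset.sum_mul, hp1, one_mul]
  have hcfar : ∀ l l', M ≤ l → l + M ≤ l' → l' < L → c l l' ≤ C * lam ^ (l' - l - M) := by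
    intro l l' h1 h2 h3
    exact pair_far hd hR hrpos hrR hpk0 hpk1 μ0 hμ01 μ hμpos hμ1 hstat lam hlam0 hlam1 hop M L
      hRM Sst hS ν hν0 hν1 hνit l l' h1 h2 h3 _
  have hcb : ∀ l ∈ Finset.Ico M L, ∀ l' ∈ Finset.Ico M L, c l l' ≤ b ((l - l') + (l' - l)) := by
    intro l hl l' hl'
    rw [Finset.mem_Ico] at hl hl'
    simp only [hb]
    split_ifs with h
    · exact hcnear l l'
    · rcases le_total l l' with h1 | h1
      · have := hcfar l l' hl.1 (by omega) hl'.2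
        rwa [show l - l' + (l' - l) - M = l' - l - M by omega]
      · have := hcfar l' l hl'.1 (by omega) hl.2
        rw [hcsymm]
        rwa [show l - l' + (l' - l) - M = l - l' - M by omega]
  set B := (1 - lam)⁻¹ * C with hB
  have hBnn : 0 ≤ B := mul_nonneg (inv_nonneg.mpr hlam'.le) hC0
  have hccsum : ∑ l ∈ Finset.Ico M L, ∑ l' ∈ Finset.Ico M L, c l l' ≤ N * (2 * (2 * M + B)) := by
    calc _ ≤ ∑ l ∈ Finset.Ico M L, 2 * (2 * M + B) := by
          refine Finset.sum_le_sum fun l hl => ?_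
          refine (Finset.sum_le_sum fun l' hl' => hcb l hl l' hl').trans ?_
          refine (sum_dist_bound M L b hb0 l (Finset.mem_Ico.mp hl).2).trans ?_
          have := sum_b_bound M L C lam hC0 hlam0 hlam1
          linarith
      _ = _ := by simp [hN]
  have hEV : ∑ x, p x * V x ≤ 4 * (B + 4 * M) / L := by
    have hVx : ∀ x, V x = (1 / N ^ 2) * ∑ l ∈ Finset.Ico M L, ∑ l' ∈ Finset.Ico M L,
        ∑ w, (ind Sst l w (extd hd x) - ν w) * (ind Sst l' w (extd hd x) - ν w) := by
      intro x
      have h1 : ∀ w, (cnt x w / N - ν w) ^ 2 = (1 / N ^ 2) *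
          ∑ l ∈ Finset.Ico M L, ∑ l' ∈ Finset.Ico M L,
            (ind Sst l w (extd hd x) - ν w) * (ind Sst l' w (extd hd x) - ν w) := by
        intro w
        rw [← Finset.sum_mul_sum, Finset.sum_sub_distrib]
        simp only [Finset.sum_const, Nat.card_Ico, nsmul_eq_mul]
        rw [← hN]
        simp only [hcnt]
        field_simp
      simp only [hV, h1]
      rw [← Finset.mul_sum, Finset.sum_comm]
      congr 1
      exact Finset.sum_congr rfl fun l _ => Finset.sum_comm
    have hEc : ∑ x, p x * V x = (1 / N ^ 2) *
        ∑ l ∈ Finset.Ico M L, ∑ l' ∈ Finset.Ico M L, c l l' := by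
      simp only [hVx, hc]
      rw [Finset.mul_sum]
      simp only [Finset.mul_sum]
      rw [Finset.sum_comm]
      refine Finset.sum_congr rfl fun l _ => ?_
      rw [Finset.sum_comm]
      refine Finset.sum_congr rfl fun l' _ => ?_
      refine Finset.sum_congr rfl fun x _ => ?_
      refine Finset.sum_congr rfl fun w _ => ?_
      ring
    rw [hEc]
    have hM0 : (0 : ℝ) ≤ M := Nat.cast_nonneg M
    calc _ ≤ (1 / N ^ 2) * (N * (2 * (2 * M + B))) :=
          mul_le_mul_of_nonneg_left hccsum (by positivity)
      _ = 2 * (2 * M + B) / N := by field_simp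
      _ ≤ _ := by
          rw [div_le_div_iff₀ hN0 hL0]
          nlinarith [mul_le_mul_of_nonneg_left hNL (by positivity : 0 ≤ 2 * (2 * (M : ℝ) + B)),
            mul_nonneg hM0 hN0.le]
  -- conclusion
  have hjen : ∑ x, p x * Real.sqrt (V x) ≤ Real.sqrt (∑ x, p x * V x) := by
    have := Real.sum_mul_le_sqrt_mul_sqrt Finset.univ (fun x => Real.sqrt (p x))
      (fun x => Real.sqrt (p x) * Real.sqrt (V x))
    simp only [mul_pow, Real.sq_sqrt (hp0 _), Real.sq_sqrt (hV0 _), hp1, Real.sqrt_one,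
      one_mul, ← mul_assoc, Real.mul_self_sqrt (hp0 _)] at this
    exact this
  calc _ ≤ ∑ x, p x * (2 / m * Real.sqrt (V x)) :=
        Finset.sum_le_sum fun x _ => mul_le_mul_of_nonneg_left (hpoint x) (hp0 x)
    _ = 2 / m * ∑ x, p x * Real.sqrt (V x) := by
        rw [Finset.mul_sum]
        exact Finset.sum_congr rfl fun x _ => by ring
    _ ≤ 2 / m * Real.sqrt (4 * (B + 4 * M) / L) :=
        mul_le_mul_of_nonneg_left (hjen.trans (Real.sqrt_le_sqrt hEV)) (by positivity)
    _ = _ := by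
        have h4 : Real.sqrt 4 = 2 := by
          rw [show (4 : ℝ) = 2 ^ 2 by norm_num, Real.sqrt_sq (by norm_num)]
        have hM0 : (0 : ℝ) ≤ M := Nat.cast_nonneg M
        rw [Real.sqrt_div (by positivity), Real.sqrt_mul (by norm_num), h4]
        have : Real.sqrt L ≠ 0 := (Real.sqrt_pos.mpr hL0).ne'
        field_simp
        ring
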